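/- For all natural numbers n ≥ 1 and real parameters a, b, x (with nonzero denominators), the monic Jacobi polynomials satisfy the structure relation (1−x²)·(P_n^{(a,b)})'(x) = −n·P_{n+1}^{(a,b)}(x) + (2n(a−b)(n+a+b+1)/((2n+2+a+b)(2n+a+b)))·P_n^{(a,b)}(x) + (4n(n+b)(a+n)(n+a+b+1)(n+a+b)/((2n+a+b+1)(2n+a+b−1)(2n+a+b)²))·P_{n-1}^{(a,b)}(x). -/

import Mathlib

/-- Rising factorial `(a)_k = a(a+1)⋯(a+k-1)`. -/
noncomputable def rf (a : ℝ) (k : ℕ) : ℝ := ∏ j ∈ Finset.range k, (a + j)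

/-- Monic Jacobi polynomials
`P_n^{(a,b)}(x) = ((a+1)_n 2^n / (n+a+b+1)_n) ∑_{k=0}^n
  ((-n)_k (n+a+b+1)_k / ((a+1)_k k!)) ((1-x)/2)^k`. -/
noncomputable def jacobi (a b : ℝ) (n : ℕ) (x : ℝ) : ℝ :=
  rf (a + 1) n * 2 ^ n / rf ((n : ℝ) + a + b + 1) n *
    ∑ k ∈ Finset.range (n + 1),
      rf (-(n : ℝ)) k * rf ((n : ℝ) + a + b + 1) k / (rf (a + 1) k * (k.factorial : ℝ)) *
        ((1 - x) / 2) ^ k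

/-- Derivative of the monic Jacobi polynomial with respect to `x`. -/
noncomputable def jacobiDeriv (a b : ℝ) (n : ℕ) (x : ℝ) : ℝ := deriv (jacobi a b n) x

theorem rf_zero (a : ℝ) : rf a 0 = 1 := by simp [rf]

theorem rf_succ (a : ℝ) (k : ℕ) : rf a (k + 1) = rf a k * (a + k) := by
  simp [rf, Finset.prod_range_succ]

theorem rf_succ_left (a : ℝ) (k : ℕ) : rf a (k + 1) = a * rf (a + 1) k := by
  simp only [rf, Finset.prod_range_succ', Nat.cast_zero, add_zero, mul_comm a]
  congr 1
  exact Finset.prod_congr rfl fun j _ => by push_cast; ring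

theorem rf_neg_natCast_eq_zero {n k : ℕ} (h : n < k) : rf (-(n : ℝ)) k = 0 :=
  Finset.prod_eq_zero (Finset.mem_range.2 h) (by simp)

/-- The coefficient of `((1 - x) / 2) ^ k` in the monic Jacobi polynomial of degree `n`. -/
noncomputable def jacobiCoeff (a b : ℝ) (n k : ℕ) : ℝ :=
  rf (a + 1) n * 2 ^ n / rf ((n : ℝ) + a + b + 1) n *
    (rf (-(n : ℝ)) k * rf ((n : ℝ) + a + b + 1) k / (rf (a + 1) k * (k.factorial : ℝ)))

theorem jacobiCoeff_eq_zero (a b : ℝ) {n k : ℕ} (h : n < k) : jacobiCoeff a b n k = 0 := by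
  simp [jacobiCoeff, rf_neg_natCast_eq_zero h]

theorem jacobi_eq_sum (a b : ℝ) {n M : ℕ} (h : n < M) (x : ℝ) :
    jacobi a b n x = ∑ k ∈ Finset.range M, jacobiCoeff a b n k * ((1 - x) / 2) ^ k := by
  have hsub : Finset.range (n + 1) ⊆ Finset.range M := Finset.range_subset_range.2 h
  rw [← Finset.sum_subset hsub fun k _ hk => by
    rw [jacobiCoeff_eq_zero a b (by simpa using hk), zero_mul]]
  simp only [jacobi, jacobiCoeff, Finset.mul_sum, mul_assoc]

theorem one_sub_sq_mul_jacobiDeriv (a b : ℝ) (n : ℕ) (x : ℝ) :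
    (1 - x ^ 2) * jacobiDeriv a b n x =
      ∑ k ∈ Finset.range (n + 1),
        (-2 * (k + 1) * jacobiCoeff a b n (k + 1) + 2 * k * jacobiCoeff a b n k) *
          ((1 - x) / 2) ^ (k + 1) := by
  have hd : HasDerivAt (jacobi a b n)
      (∑ k ∈ Finset.range (n + 2),
        jacobiCoeff a b n k * (k * ((1 - x) / 2) ^ (k - 1) * (-1 / 2))) x := by
    rw [show jacobi a b n = fun y => ∑ k ∈ Finset.range (n + 2),
      jacobiCoeff a b n k * ((1 - y) / 2) ^ k from funext (jacobi_eq_sum a b (by omega))]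
    refine HasDerivAt.fun_sum fun k _ => ?_
    exact ((((hasDerivAt_id x).const_sub 1).div_const 2).pow k).const_mul _
  rw [jacobiDeriv, hd.deriv]
  set y := (1 - x) / 2 with hy
  have hx : 1 - x ^ 2 = 4 * y * (1 - y) := by rw [hy]; ring
  have hlast := jacobiCoeff_eq_zero a b (Nat.lt_succ_self n)
  have hshift : ∑ k ∈ Finset.range (n + 1), 2 * (k : ℝ) * jacobiCoeff a b n k * y ^ (k + 1) =
      ∑ k ∈ Finset.range (n + 1),
        2 * ((k : ℝ) + 1) * jacobiCoeff a b n (k + 1) * y ^ (k + 2) := by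
    have h := Finset.sum_range_succ
      (fun k : ℕ => 2 * (k : ℝ) * jacobiCoeff a b n k * y ^ (k + 1)) (n + 1)
    rw [Finset.sum_range_succ', hlast] at h
    simpa using h.symm
  simp only [add_mul, Finset.sum_add_distrib] at hshift ⊢
  rw [hshift, ← Finset.sum_add_distrib, hx, Finset.sum_range_succ',
    mul_add, Finset.mul_sum]
  simp only [Nat.cast_zero, zero_mul, mul_zero, add_zero]
  refine Finset.sum_congr rfl fun k _ => ?_
  simp only [Nat.add_sub_cancel, Nat.cast_add, Nat.cast_one]
  ring

section Coefficients

variable {a b : ℝ} {m : ℕ}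

/-- The constants of the monic Jacobi polynomials of degrees `m`, `m + 1` and `m + 2` are
multiples of a common one. -/
theorem jacobi_constants (hm : (m : ℝ) + 1 + a + b ≠ 0) (hm' : (m : ℝ) + 2 + a + b ≠ 0)
    (h0 : rf ((m : ℝ) + a + b + 1) m ≠ 0) (h2 : rf ((m : ℝ) + 3 + a + b) m ≠ 0) :
    rf (a + 1) (m + 2) * 2 ^ (m + 2) / rf (((m + 2 : ℕ) : ℝ) + a + b + 1) (m + 2) =
        rf (a + 1) m * 2 ^ m / rf ((m : ℝ) + 3 + a + b) m *
          (4 * (a + 1 + m) * (a + 2 + m) /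
            ((2 * m + 3 + a + b) * (2 * m + 4 + a + b))) ∧
      rf (a + 1) (m + 1) * 2 ^ (m + 1) / rf (((m + 1 : ℕ) : ℝ) + a + b + 1) (m + 1) =
        rf (a + 1) m * 2 ^ m / rf ((m : ℝ) + 3 + a + b) m *
          (2 * (a + 1 + m) / (m + 2 + a + b)) ∧
      rf (a + 1) m * 2 ^ m / rf ((m : ℝ) + a + b + 1) m =
        rf (a + 1) m * 2 ^ m / rf ((m : ℝ) + 3 + a + b) m *
          ((2 * m + 1 + a + b) * (2 * m + 2 + a + b) /
            ((m + 1 + a + b) * (m + 2 + a + b))) := by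
  refine ⟨?_, ?_, ?_⟩
  · rw [show ((m + 2 : ℕ) : ℝ) + a + b + 1 = m + 3 + a + b by push_cast; ring]
    simp only [rf_succ, pow_succ, Nat.cast_add, Nat.cast_one]
    rw [show (m : ℝ) + 3 + a + b + m = 2 * m + 3 + a + b by ring,
      show (m : ℝ) + 3 + a + b + (m + 1) = 2 * m + 4 + a + b by ring]
    simp only [div_eq_mul_inv, mul_inv]
    ring
  · rw [rf_succ_left (((m + 1 : ℕ) : ℝ) + a + b + 1),
      show ((m + 1 : ℕ) : ℝ) + a + b + 1 = m + 2 + a + b by push_cast; ring,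
      show (m : ℝ) + 2 + a + b + 1 = m + 3 + a + b by ring, rf_succ, pow_succ]
    simp only [div_eq_mul_inv, mul_inv]
    ring
  · have key : rf ((m : ℝ) + a + b + 1) m * (2 * m + 1 + a + b) * (2 * m + 2 + a + b) =
        (m + 1 + a + b) * ((m + 2 + a + b) * rf ((m : ℝ) + 3 + a + b) m) := by
      have h := (rf_succ ((m : ℝ) + a + b + 1) (m + 1)).symm.trans (rf_succ_left _ _)
      rw [rf_succ, rf_succ_left ((m : ℝ) + a + b + 1 + 1),
        show (m : ℝ) + a + b + 1 + 1 + 1 = m + 3 + a + b by ring] at h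
      push_cast at h
      linear_combination h
    rw [div_eq_mul_inv, div_eq_mul_inv, mul_assoc _ (rf ((m : ℝ) + 3 + a + b) m)⁻¹]
    congr 1
    field_simp
    linear_combination -key

theorem middle_coeff_mul_constant (hm' : (m : ℝ) + 2 + a + b ≠ 0)
    (h2 : 2 * (m : ℝ) + 2 + a + b ≠ 0) (h4 : 2 * (m : ℝ) + 4 + a + b ≠ 0) (E r : ℝ) :
    2 * (m + 1) * (a - b) * (m + 2 + a + b) /
            ((2 * m + 4 + a + b) * (2 * m + 2 + a + b)) *
          (E * (2 * (a + 1 + m) / (m + 2 + a + b)) * r) =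
      E * (4 * (m + 1) * (a - b) * (a + 1 + m) /
        ((2 * m + 4 + a + b) * (2 * m + 2 + a + b))) * r := by
  generalize (m : ℝ) + 2 + a + b = u at *
  generalize 2 * (m : ℝ) + 2 + a + b = v at *
  generalize 2 * (m : ℝ) + 4 + a + b = w at *
  field_simp
  ring

theorem last_coeff_mul_constant (hm : (m : ℝ) + 1 + a + b ≠ 0)
    (hm' : (m : ℝ) + 2 + a + b ≠ 0)
    (h1 : 2 * (m : ℝ) + 1 + a + b ≠ 0) (h2 : 2 * (m : ℝ) + 2 + a + b ≠ 0)
    (h3 : 2 * (m : ℝ) + 3 + a + b ≠ 0) (E r : ℝ) :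
    4 * (m + 1) * (m + 1 + b) * (a + m + 1) * (m + 2 + a + b) * (m + 1 + a + b) /
            ((2 * m + 3 + a + b) * (2 * m + 1 + a + b) * (2 * m + 2 + a + b) ^ 2) *
          (E * ((2 * m + 1 + a + b) * (2 * m + 2 + a + b) /
            ((m + 1 + a + b) * (m + 2 + a + b))) * r) =
      E * (4 * (m + 1) * (m + 1 + b) * (a + m + 1) /
        ((2 * m + 3 + a + b) * (2 * m + 2 + a + b))) * r := by
  generalize (m : ℝ) + 1 + a + b = t at *
  generalize (m : ℝ) + 2 + a + b = u at *
  generalize 2 * (m : ℝ) + 1 + a + b = v at *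
  generalize 2 * (m : ℝ) + 2 + a + b = w at *
  generalize 2 * (m : ℝ) + 3 + a + b = z at *
  field_simp

/-- Coefficientwise form of the structure relation in degree `m + 1`. -/
theorem jacobiCoeff_relation (k : ℕ)
    (ha : rf (a + 1) (k + 1) ≠ 0)
    (hm : (m : ℝ) + 1 + a + b ≠ 0) (hm' : (m : ℝ) + 2 + a + b ≠ 0)
    (hr0 : rf ((m : ℝ) + a + b + 1) m ≠ 0) (hr2 : rf ((m : ℝ) + 3 + a + b) m ≠ 0)
    (h1 : 2 * (m : ℝ) + 1 + a + b ≠ 0) (h2 : 2 * (m : ℝ) + 2 + a + b ≠ 0)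
    (h3 : 2 * (m : ℝ) + 3 + a + b ≠ 0) (h4 : 2 * (m : ℝ) + 4 + a + b ≠ 0) :
    -2 * (k + 1) * jacobiCoeff a b (m + 1) (k + 1) + 2 * k * jacobiCoeff a b (m + 1) k =
      -((m : ℝ) + 1) * jacobiCoeff a b (m + 2) (k + 1) +
        2 * (m + 1) * (a - b) * (m + 2 + a + b) /
            ((2 * m + 4 + a + b) * (2 * m + 2 + a + b)) *
          jacobiCoeff a b (m + 1) (k + 1) +
        4 * (m + 1) * (m + 1 + b) * (a + m + 1) * (m + 2 + a + b) * (m + 1 + a + b) /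
            ((2 * m + 3 + a + b) * (2 * m + 1 + a + b) * (2 * m + 2 + a + b) ^ 2) *
          jacobiCoeff a b m (k + 1) := by
  obtain ⟨e2, e1, e0⟩ := jacobi_constants hm hm' hr0 hr2
  unfold jacobiCoeff
  rw [e2, e1, e0, middle_coeff_mul_constant hm' h2 h4,
    last_coeff_mul_constant hm hm' h1 h2 h3]
  generalize rf (a + 1) m * 2 ^ m / rf ((m : ℝ) + 3 + a + b) m = E
  clear e0 e1 e2 hr0 hr2
  rcases k with _ | j
  · simp only [rf_succ, rf_zero] at ha ⊢
    simp only [Nat.cast_zero, add_zero, one_mul] at ha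
    simp only [Nat.factorial_one, Nat.factorial_zero, Nat.cast_zero, Nat.cast_one, Nat.cast_add,
      Nat.cast_ofNat, zero_add, add_zero, one_mul, mul_one, mul_zero, zero_mul]
    generalize hu : (m : ℝ) + 2 + a + b = u at *
    generalize hv : 2 * (m : ℝ) + 2 + a + b = v at *
    generalize hw : 2 * (m : ℝ) + 3 + a + b = w at *
    generalize hz : 2 * (m : ℝ) + 4 + a + b = z at *
    field_simp
    subst hu hv hw hz
    ring
  · have hu1 : rf (-((m + 2 : ℕ) : ℝ)) (j + 1 + 1) = (m + 2) * (m + 1) * rf (-(m : ℝ)) j := by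
      rw [rf_succ_left, rf_succ_left, show -((m + 2 : ℕ) : ℝ) + 1 + 1 = -m by push_cast; ring]
      push_cast; ring
    have hu2 : rf (-((m + 1 : ℕ) : ℝ)) (j + 1) = -(m + 1) * rf (-(m : ℝ)) j := by
      rw [rf_succ_left, show -((m + 1 : ℕ) : ℝ) + 1 = -m by push_cast; ring]
      push_cast; ring
    have hv1 : ((m + 2 : ℕ) : ℝ) + a + b + 1 = m + 3 + a + b := by push_cast; ring
    have hv2 : rf (((m + 1 : ℕ) : ℝ) + a + b + 1) (j + 1) =
        (m + 2 + a + b) * rf (m + 3 + a + b) j := by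
      rw [rf_succ_left, show ((m + 1 : ℕ) : ℝ) + a + b + 1 + 1 = m + 3 + a + b by push_cast; ring]
      push_cast; ring
    have hv3 : rf ((m : ℝ) + a + b + 1) (j + 1 + 1) =
        (m + 1 + a + b) * (m + 2 + a + b) * rf (m + 3 + a + b) j := by
      rw [rf_succ_left, rf_succ_left, show (m : ℝ) + a + b + 1 + 1 + 1 = m + 3 + a + b by ring]
      ring
    rw [hu1, hv1, hv3, rf_succ (-((m + 1 : ℕ) : ℝ)), hu2, rf_succ (((m + 1 : ℕ) : ℝ) + a + b + 1),
      hv2]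
    simp only [rf_succ, Nat.factorial_succ] at ha ⊢
    have hj : (j.factorial : ℝ) ≠ 0 := by positivity
    have hj1 : (j : ℝ) + 1 ≠ 0 := by positivity
    have hj2 : (j : ℝ) + 1 + 1 ≠ 0 := by positivity
    push_cast at ha ⊢
    obtain ⟨⟨ha0, ha1⟩, ha2⟩ : (rf (a + 1) j ≠ 0 ∧ a + 1 + j ≠ 0) ∧ a + 1 + (j + 1) ≠ 0 := by
      simpa only [mul_ne_zero_iff] using ha
    clear hu1 hu2 hv1 hv2 hv3 ha
    generalize rf (a + 1) j = D at *
    generalize rf (-(m : ℝ)) j = U at *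
    generalize rf ((m : ℝ) + 3 + a + b) j = V at *
    generalize (j.factorial : ℝ) = F at *
    generalize (j : ℝ) = t at *
    generalize hu : (m : ℝ) + 2 + a + b = u at *
    generalize hv : 2 * (m : ℝ) + 2 + a + b = v at *
    generalize hw : 2 * (m : ℝ) + 3 + a + b = w at *
    generalize hz : 2 * (m : ℝ) + 4 + a + b = z at *
    field_simp
    subst hu hv hw hz
    ring

/-- The constant term (at `x = 1`) of the structure relation in degree `m + 1`. -/
theorem jacobiCoeff_zero_relation
    (hm : (m : ℝ) + 1 + a + b ≠ 0) (hm' : (m : ℝ) + 2 + a + b ≠ 0)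
    (hr0 : rf ((m : ℝ) + a + b + 1) m ≠ 0) (hr2 : rf ((m : ℝ) + 3 + a + b) m ≠ 0)
    (h1 : 2 * (m : ℝ) + 1 + a + b ≠ 0) (h2 : 2 * (m : ℝ) + 2 + a + b ≠ 0)
    (h3 : 2 * (m : ℝ) + 3 + a + b ≠ 0) (h4 : 2 * (m : ℝ) + 4 + a + b ≠ 0) :
    0 = -((m : ℝ) + 1) * jacobiCoeff a b (m + 2) 0 +
        2 * (m + 1) * (a - b) * (m + 2 + a + b) /
            ((2 * m + 4 + a + b) * (2 * m + 2 + a + b)) *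
          jacobiCoeff a b (m + 1) 0 +
        4 * (m + 1) * (m + 1 + b) * (a + m + 1) * (m + 2 + a + b) * (m + 1 + a + b) /
            ((2 * m + 3 + a + b) * (2 * m + 1 + a + b) * (2 * m + 2 + a + b) ^ 2) *
          jacobiCoeff a b m 0 := by
  obtain ⟨e2, e1, e0⟩ := jacobi_constants hm hm' hr0 hr2
  unfold jacobiCoeff
  rw [e2, e1, e0, middle_coeff_mul_constant hm' h2 h4,
    last_coeff_mul_constant hm hm' h1 h2 h3]
  generalize rf (a + 1) m * 2 ^ m / rf ((m : ℝ) + 3 + a + b) m = E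
  clear e0 e1 e2 hr0 hr2
  simp only [rf_zero, Nat.factorial_zero, Nat.cast_one, mul_one, div_one]
  generalize hu : (m : ℝ) + 2 + a + b = u at *
  generalize hv : 2 * (m : ℝ) + 2 + a + b = v at *
  generalize hw : 2 * (m : ℝ) + 3 + a + b = w at *
  generalize hz : 2 * (m : ℝ) + 4 + a + b = z at *
  field_simp
  subst hu hv hw hz
  ring

end Coefficients

theorem jacobi_structure_relation (n : ℕ) (hn : 1 ≤ n) (a b x : ℝ)
    (hpoch1 : ∀ k ≤ n + 1, rf (a + 1) k ≠ 0)
    (hpoch2 : ∀ m ≤ n + 1, rf ((m : ℝ) + a + b + 1) m ≠ 0)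
    (h1 : 2 * (n : ℝ) + a + b ≠ 0) (h2 : 2 * (n : ℝ) + a + b + 1 ≠ 0)
    (h3 : 2 * (n : ℝ) + a + b - 1 ≠ 0) (h4 : 2 * (n : ℝ) + 2 + a + b ≠ 0) :
    (1 - x ^ 2) * jacobiDeriv a b n x =
      -(n : ℝ) * jacobi a b (n + 1) x +
        (2 * n * (a - b) * (n + a + b + 1) / ((2 * n + 2 + a + b) * (2 * n + a + b))) *
          jacobi a b n x +
        (4 * n * (n + b) * (a + n) * (n + a + b + 1) * (n + a + b) /
            ((2 * n + a + b + 1) * (2 * n + a + b - 1) * (2 * n + a + b) ^ 2)) *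
          jacobi a b (n - 1) x := by
  obtain ⟨m, rfl⟩ : ∃ m, n = m + 1 := ⟨n - 1, by omega⟩
  push_cast at h1 h2 h3 h4 ⊢
  have g1 : 2 * (m : ℝ) + 1 + a + b ≠ 0 := by convert h3 using 1; ring
  have g2 : 2 * (m : ℝ) + 2 + a + b ≠ 0 := by convert h1 using 1; ring
  have g3 : 2 * (m : ℝ) + 3 + a + b ≠ 0 := by convert h2 using 1; ring
  have g4 : 2 * (m : ℝ) + 4 + a + b ≠ 0 := by convert h4 using 1; ring
  have hr0 := hpoch2 m (by omega)
  have hr1 := hpoch2 (m + 1) (by omega)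
  rw [rf_succ_left, show ((m + 1 : ℕ) : ℝ) + a + b + 1 + 1 = m + 3 + a + b by push_cast; ring,
    show ((m + 1 : ℕ) : ℝ) + a + b + 1 = m + 2 + a + b by push_cast; ring] at hr1
  have hm' := left_ne_zero_of_mul hr1
  have hr2 := right_ne_zero_of_mul hr1
  have hm : (m : ℝ) + 1 + a + b ≠ 0 := by
    rcases m with _ | l
    · simpa using g1
    · rw [rf_succ_left] at hr0
      convert left_ne_zero_of_mul hr0 using 1
      ring
  rw [one_sub_sq_mul_jacobiDeriv, jacobi_eq_sum a b (M := m + 1 + 1 + 1) (by omega),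
    jacobi_eq_sum a b (n := m + 1) (M := m + 1 + 1 + 1) (by omega),
    jacobi_eq_sum a b (n := m) (M := m + 1 + 1 + 1) (by omega),
    Finset.mul_sum, Finset.mul_sum, Finset.mul_sum, ← Finset.sum_add_distrib,
    ← Finset.sum_add_distrib, Finset.sum_range_succ' _ (m + 1 + 1)]
  have hzero := jacobiCoeff_zero_relation hm hm' hr0 hr2 g1 g2 g3 g4
  rw [show 2 * ((m : ℝ) + 1) + 2 + a + b = 2 * m + 4 + a + b by ring,
    show 2 * ((m : ℝ) + 1) + a + b = 2 * m + 2 + a + b by ring,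
    show 2 * (m : ℝ) + 2 + a + b + 1 = 2 * m + 3 + a + b by ring,
    show 2 * (m : ℝ) + 2 + a + b - 1 = 2 * m + 1 + a + b by ring,
    show (m : ℝ) + 1 + a + b + 1 = m + 2 + a + b by ring,
    show a + ((m : ℝ) + 1) = a + m + 1 by ring]
  simp only [pow_zero, mul_one]
  rw [← hzero, add_zero]
  refine Finset.sum_congr rfl fun k hk => ?_
  have hk' := Finset.mem_range.1 hk
  rw [jacobiCoeff_relation k (hpoch1 _ (by omega)) hm hm' hr0 hr2 g1 g2 g3 g4]
  ring
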